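/- The following identities hold in Ω²: d(ω) = q⁸ z² v, d(ω̄) = −w² v, ω ω̄ = v, ω̄ ω = −q⁶ v, ω² = q¹² ((q² − 1)/(q⁴ + 1)) z⁴ v, and ω̄² = q⁻⁴ ((q² − 1)/(q⁴ + 1)) w⁴ v. -/

import Mathlib

/-!
Put `p = q²` and `η = q² ω̄`, so that `dz = w ω` and `dw = z η`. The calculus is then invariant
under exchanging `z` with `w` and `ω` with `η` while inverting `p`, so it suffices to compute `dω`,
`ω²` and `η ω`. Applying `d` to `dz` and to the commutation rules of `ω` gives `w dω = -z η ω`,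
`dω w = p z ω η` and `dω z = p z dω + (p + p⁻¹) w ω²`. Multiplying the last identity by `w` shows
that `dω` is a multiple of `w² ω²`, so `dω` commutes with `w` up to `p⁻²`, and comparing the first
two identities yields `η ω = -p³ ω η`. Substituting `dω` back into the third identity gives
`x ω² = 0` for `x = 1 - z w`, whence `dω = z w dω = -z² η ω`, and `ω² = z² w² ω²` is a multiple of
`z² dω`.
-/

/-- Commutation up to the scalar `c`; the side carrying `c` is fixed by `a b = c b a`. -/
def QCommute {K R : Type*} [CommSemiring K] [Semiring R] [Algebra K R] (c : K) (a b : R) : Prop :=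
  a * b = c • (b * a)

namespace QCommute

section CommSemiring

variable {K R : Type*} [CommSemiring K] [Semiring R] [Algebra K R] {c c' : K} {a a' b : R}

protected lemma eq (h : QCommute c a b) : a * b = c • (b * a) := h

lemma left_comm (h : QCommute c a b) (m : R) : a * (b * m) = c • (b * (a * m)) := by
  rw [← mul_assoc, h.eq, smul_mul_assoc, mul_assoc]

lemma mul_left (h : QCommute c a b) (h' : QCommute c' a' b) : QCommute (c * c') (a * a') b := by
  rw [QCommute, mul_assoc, h'.eq, mul_smul_comm, h.left_comm, smul_smul, mul_comm c']

lemma pow_left (h : QCommute c a b) (n : ℕ) : QCommute (c ^ n) (a ^ n) b := by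
  induction n with
  | zero => simp [QCommute]
  | succ n ih => simpa only [pow_succ] using ih.mul_left h

lemma add_left (h : QCommute c a b) (h' : QCommute c a' b) : QCommute c (a + a') b := by
  rw [QCommute, add_mul, h.eq, h'.eq, mul_add, smul_add]

lemma smul_left (h : QCommute c a b) (k : K) : QCommute c (k • a) b := by
  rw [QCommute, smul_mul_assoc, h.eq, mul_smul_comm, smul_comm]

lemma of_twisted_comm {A : Type*} [Semiring A] [Algebra K A] (ι : A →ₐ[K] R) {σ : A → A} {θ : R}
    (hθ : ∀ x, θ * ι x = ι (σ x) * θ) {x : A} (hσ : σ x = c • x) : QCommute c θ (ι x) := by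
  rw [QCommute, hθ, hσ, map_smul, smul_mul_assoc]

end CommSemiring

lemma symm {K R : Type*} [Semifield K] [Semiring R] [Algebra K R] {c : K} {a b : R} (hc : c ≠ 0)
    (h : QCommute c a b) : QCommute c⁻¹ b a := by
  rw [QCommute, h.eq, inv_smul_smul₀ hc]

end QCommute

/-- The quantum disc relation between `z` and `w = z*`, with `p` in place of `q²`. -/
def QuantumDiscRel {K R : Type*} [CommRing K] [Ring R] [Algebra K R] (p : K) (z w : R) : Prop :=
  w * z - p • (z * w) = (1 - p) • 1

namespace QuantumDiscRel

section CommRing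

variable {K R : Type*} [CommRing K] [Ring R] [Algebra K R] {p : K} {z w : R}

protected lemma eq (h : QuantumDiscRel p z w) : w * z = p • (z * w) + (1 - p) • 1 :=
  sub_eq_iff_eq_add'.mp h

lemma left_comm (h : QuantumDiscRel p z w) (m : R) :
    w * (z * m) = p • (z * (w * m)) + (1 - p) • m := by
  rw [← mul_assoc, h.eq, add_mul, smul_mul_assoc, smul_mul_assoc, one_mul, mul_assoc]

lemma qCommute_one_sub_left (h : QuantumDiscRel p z w) : QCommute p (1 - z * w) z := by
  simp only [QCommute, sub_mul, mul_sub, mul_assoc, h.eq, one_mul, mul_one, mul_add, mul_smul_comm]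
  module

lemma qCommute_one_sub_right (h : QuantumDiscRel p z w) : QCommute p w (1 - z * w) := by
  simp only [QCommute, sub_mul, mul_sub, mul_assoc, h.left_comm, one_mul, mul_one]
  module

end CommRing

section Field

variable {K R : Type*} [Field K] [Ring R] [Algebra K R] {p : K} {z w : R}

lemma swap (hp : p ≠ 0) (h : QuantumDiscRel p z w) : QuantumDiscRel p⁻¹ w z := by
  rw [QuantumDiscRel, h.eq]
  match_scalars <;> field_simp <;> ring

/-- Since `0 = w m z = c w z m`, both `w z` and `z w` kill `m`, and `1` is a combination of them. -/
lemma eq_zero_of_mul_eq_zero (h : QuantumDiscRel p z w) (hp : p ≠ 1) {c : K} (hc : c ≠ 0) {m : R}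
    (hmz : QCommute c m z) (hwm : w * m = 0) : m = 0 := by
  have hwzm : w * (z * m) = 0 := by
    rw [← smul_eq_zero_iff_right hc, ← mul_smul_comm, ← hmz.eq, ← mul_assoc, hwm, zero_mul]
  rw [h.left_comm, hwm, mul_zero, smul_zero, zero_add] at hwzm
  exact (smul_eq_zero_iff_right (sub_ne_zero.mpr hp.symm)).mp hwzm

end Field

end QuantumDiscRel

/-- A differential calculus on the quantum disc with one-forms `ω` and `η`, normalised so that
`dz = w ω` and `dw = z η`. Of the graded Leibniz rule only the instances with a generator as left
factor are recorded, so that no grading has to be carried along. -/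
structure IsQuantumDiscCalculus {K Ω : Type*} [Field K] [Ring Ω] [Algebra K Ω] (p : K)
    (d : Ω →ₗ[K] Ω) (z w ω η : Ω) : Prop where
  discRel : QuantumDiscRel p z w
  qCommute_ω_z : QCommute p ω z
  qCommute_ω_w : QCommute p⁻¹ ω w
  qCommute_η_z : QCommute p η z
  qCommute_η_w : QCommute p⁻¹ η w
  d_z : d z = w * ω
  d_w : d w = z * η
  d_d (ξ : Ω) : d (d ξ) = 0
  d_z_mul (ξ : Ω) : d (z * ξ) = d z * ξ + z * d ξ
  d_w_mul (ξ : Ω) : d (w * ξ) = d w * ξ + w * d ξ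
  d_ω_mul (ξ : Ω) : d (ω * ξ) = d ω * ξ - ω * d ξ
  d_η_mul (ξ : Ω) : d (η * ξ) = d η * ξ - η * d ξ

lemma ne_one_of_pow_ne_one {M : Type*} [Monoid M] {a : M} {n : ℕ} (h : a ^ n ≠ 1) : a ≠ 1 :=
  fun ha ↦ h (by rw [ha, one_pow])

lemma inv_sq_add_one_ne_zero {K : Type*} [Field K] {p : K} (hp0 : p ≠ 0) (hp2 : p ^ 2 + 1 ≠ 0) :
    p⁻¹ ^ 2 + 1 ≠ 0 := by
  have hinv : p⁻¹ ^ 2 + 1 = (p ^ 2 + 1) / p ^ 2 := by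
    field_simp
    ring
  exact hinv ▸ div_ne_zero hp2 (pow_ne_zero 2 hp0)

namespace IsQuantumDiscCalculus

variable {K Ω : Type*} [Field K] [Ring Ω] [Algebra K Ω] {p : K} {d : Ω →ₗ[K] Ω} {z w ω η : Ω}

lemma swap (h : IsQuantumDiscCalculus p d z w ω η) (hp : p ≠ 0) :
    IsQuantumDiscCalculus p⁻¹ d w z η ω where
  discRel := h.discRel.swap hp
  qCommute_ω_z := h.qCommute_η_w
  qCommute_ω_w := (inv_inv p).symm ▸ h.qCommute_η_z
  qCommute_η_z := h.qCommute_ω_w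
  qCommute_η_w := (inv_inv p).symm ▸ h.qCommute_ω_z
  d_z := h.d_w
  d_w := h.d_z
  d_d := h.d_d
  d_z_mul := h.d_w_mul
  d_w_mul := h.d_z_mul
  d_ω_mul := h.d_η_mul
  d_η_mul := h.d_ω_mul

lemma w_mul_d_ω (h : IsQuantumDiscCalculus p d z w ω η) : w * d ω = -(z * (η * ω)) := by
  have hddz := h.d_d z
  rw [h.d_z, h.d_w_mul, h.d_w, mul_assoc] at hddz
  exact eq_neg_of_add_eq_zero_right hddz

lemma d_ω_mul_w (h : IsQuantumDiscCalculus p d z w ω η) : d ω * w = p • (z * (ω * η)) := by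
  have hd : d (ω * w) = 0 := by rw [h.qCommute_ω_w.eq, map_smul, ← h.d_z, h.d_d, smul_zero]
  rw [h.d_ω_mul, h.d_w, h.qCommute_ω_z.left_comm] at hd
  exact sub_eq_zero.mp hd

lemma d_ω_mul_z (h : IsQuantumDiscCalculus p d z w ω η) :
    d ω * z = p • (z * d ω) + (p + p⁻¹) • (w * ω ^ 2) := by
  have hd : d ω * z - ω * (w * ω) = p • (w * ω * ω + z * d ω) := by
    rw [← h.d_z, ← h.d_ω_mul, h.qCommute_ω_z.eq, map_smul, h.d_z_mul]
  rw [sub_eq_iff_eq_add.mp hd, h.qCommute_ω_w.left_comm, pow_two, mul_assoc]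
  module

lemma d_ω_eq_smul_w_sq_mul_ω_sq (h : IsQuantumDiscCalculus p d z w ω η) (hp0 : p ≠ 0)
    (hp1 : p ≠ 1) : d ω = (-(p ^ 2 + 1) / (p ^ 2 * (1 - p))) • (w ^ 2 * ω ^ 2) := by
  have hp1' : 1 - p ≠ 0 := sub_ne_zero.mpr hp1.symm
  have hleft : w * (d ω * z) = -(p ^ 2 • (z * (z * (η * ω)))) := by
    rw [← mul_assoc, h.w_mul_d_ω, neg_mul, mul_assoc,
      (h.qCommute_η_z.mul_left h.qCommute_ω_z).eq, mul_smul_comm, ← pow_two]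
  have hright : w * (d ω * z) =
      -(p ^ 2 • (z * (z * (η * ω)))) + (p * (1 - p)) • d ω + (p + p⁻¹) • (w ^ 2 * ω ^ 2) := by
    rw [h.d_ω_mul_z, mul_add, mul_smul_comm, mul_smul_comm, h.discRel.left_comm, h.w_mul_d_ω,
      mul_neg, ← mul_assoc w w, ← pow_two w]
    module
  have hsum : (p * (1 - p)) • d ω + (p + p⁻¹) • (w ^ 2 * ω ^ 2) = 0 := by
    rwa [hleft, add_assoc, left_eq_add] at hright
  linear_combination (norm := skip) (p * (1 - p))⁻¹ • hsum
  match_scalars <;> field_simp <;> ring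

lemma qCommute_d_ω_w (h : IsQuantumDiscCalculus p d z w ω η) (hp0 : p ≠ 0) (hp1 : p ≠ 1) :
    QCommute (p⁻¹ ^ 2) (d ω) w := by
  have hw : QCommute (1 : K) (w ^ 2) w := by
    rw [QCommute, one_smul, ← pow_succ, ← pow_succ']
  rw [h.d_ω_eq_smul_w_sq_mul_ω_sq hp0 hp1]
  simpa only [one_mul] using (hw.mul_left (h.qCommute_ω_w.pow_left 2)).smul_left _

lemma η_mul_ω (h : IsQuantumDiscCalculus p d z w ω η) (hp0 : p ≠ 0) (hp1 : p ≠ 1) :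
    η * ω = -(p ^ 3 • (ω * η)) := by
  have hz : z * (η * ω + p ^ 3 • (ω * η)) = 0 :=
    calc z * (η * ω + p ^ 3 • (ω * η)) = -(w * d ω) + p ^ 2 • (p • (z * (ω * η))) := by
          rw [h.w_mul_d_ω, mul_add, mul_smul_comm]
          module
      _ = 0 := by
          rw [← h.d_ω_mul_w, (h.qCommute_d_ω_w hp0 hp1).eq, smul_smul, inv_pow,
            mul_inv_cancel₀ (pow_ne_zero 2 hp0), one_smul, neg_add_cancel]
  have hw : QCommute (p⁻¹ * p⁻¹) (η * ω + p ^ 3 • (ω * η)) w :=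
    (h.qCommute_η_w.mul_left h.qCommute_ω_w).add_left
      ((h.qCommute_ω_w.mul_left h.qCommute_η_w).smul_left _)
  have hpinv : p⁻¹ ≠ 0 := inv_ne_zero hp0
  exact eq_neg_of_add_eq_zero_left <|
    (h.discRel.swap hp0).eq_zero_of_mul_eq_zero (inv_ne_one.mpr hp1) (mul_ne_zero hpinv hpinv) hw hz

lemma one_sub_mul_w_mul_ω_sq_eq_zero (h : IsQuantumDiscCalculus p d z w ω η) (hp0 : p ≠ 0)
    (hp3 : p ^ 3 ≠ 1) (hp2 : p ^ 2 + 1 ≠ 0) : (1 - z * w) * (w * ω ^ 2) = 0 := by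
  have hp1 : p ≠ 1 := ne_one_of_pow_ne_one hp3
  have hp1' : 1 - p ≠ 0 := sub_ne_zero.mpr hp1.symm
  have hp3' : p ^ 2 + p + 1 ≠ 0 := fun hp ↦ hp3 (by linear_combination (p - 1) * hp)
  have hwwz : w ^ 2 * ω ^ 2 * z =
      p ^ 4 • (z * (w * (w * ω ^ 2))) + (p ^ 2 * (1 - p ^ 2)) • (w * ω ^ 2) := by
    rw [pow_two w, mul_assoc, (h.qCommute_ω_z.pow_left 2).eq, mul_smul_comm, mul_assoc,
      h.discRel.left_comm, mul_add, mul_smul_comm, mul_smul_comm, h.discRel.left_comm]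
    module
  have hdωz := h.d_ω_mul_z
  rw [h.d_ω_eq_smul_w_sq_mul_ω_sq hp0 hp1, smul_mul_assoc, hwwz, mul_smul_comm, pow_two w,
    mul_assoc w w] at hdωz
  have hcoeff : ((p ^ 2 + 1) * (p ^ 2 + p + 1) / p) • ((1 - z * w) * (w * ω ^ 2)) = 0 := by
    rw [sub_mul, one_mul, mul_assoc z w]
    linear_combination (norm := skip) -hdωz
    match_scalars <;> field_simp <;> ring
  exact (smul_eq_zero_iff_right (by positivity)).mp hcoeff

lemma one_sub_mul_ω_sq_eq_zero (h : IsQuantumDiscCalculus p d z w ω η) (hp0 : p ≠ 0)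
    (hp3 : p ^ 3 ≠ 1) (hp2 : p ^ 2 + 1 ≠ 0) : (1 - z * w) * ω ^ 2 = 0 := by
  have hp1 : p ≠ 1 := ne_one_of_pow_ne_one hp3
  refine h.discRel.eq_zero_of_mul_eq_zero hp1 (mul_ne_zero hp0 (pow_ne_zero 2 hp0))
    (h.discRel.qCommute_one_sub_left.mul_left (h.qCommute_ω_z.pow_left 2)) ?_
  rw [h.discRel.qCommute_one_sub_right.left_comm, h.one_sub_mul_w_mul_ω_sq_eq_zero hp0 hp3 hp2,
    smul_zero]

lemma d_ω (h : IsQuantumDiscCalculus p d z w ω η) (hp0 : p ≠ 0) (hp3 : p ^ 3 ≠ 1)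
    (hp2 : p ^ 2 + 1 ≠ 0) : d ω = p ^ 3 • (z ^ 2 * (ω * η)) := by
  have hp1 : p ≠ 1 := ne_one_of_pow_ne_one hp3
  have hxw := h.discRel.qCommute_one_sub_right.symm hp0
  have hxdω : (1 - z * w) * d ω = 0 := by
    rw [h.d_ω_eq_smul_w_sq_mul_ω_sq hp0 hp1, mul_smul_comm, pow_two w, mul_assoc w w,
      hxw.left_comm, h.one_sub_mul_w_mul_ω_sq_eq_zero hp0 hp3 hp2, mul_zero, smul_zero, smul_zero]
  calc d ω = z * (w * d ω) := by rwa [sub_mul, one_mul, sub_eq_zero, mul_assoc] at hxdω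
    _ = p ^ 3 • (z ^ 2 * (ω * η)) := by
      rw [h.w_mul_d_ω, h.η_mul_ω hp0 hp1, mul_neg, mul_neg, mul_neg, neg_neg, mul_smul_comm,
        mul_smul_comm, pow_two, mul_assoc]

lemma ω_sq (h : IsQuantumDiscCalculus p d z w ω η) (hp0 : p ≠ 0) (hp3 : p ^ 3 ≠ 1)
    (hp2 : p ^ 2 + 1 ≠ 0) :
    ω ^ 2 = (p ^ 5 * ((p - 1) / (p ^ 2 + 1))) • (z ^ 4 * (ω * η)) := by
  have hp1 : p ≠ 1 := ne_one_of_pow_ne_one hp3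
  have hω := h.one_sub_mul_ω_sq_eq_zero hp0 hp3 hp2
  have hwω := h.one_sub_mul_w_mul_ω_sq_eq_zero hp0 hp3 hp2
  rw [sub_mul, one_mul, sub_eq_zero, mul_assoc] at hω hwω
  have hwwω : w ^ 2 * ω ^ 2 = (p ^ 2 * ((p - 1) / (p ^ 2 + 1))) • d ω := by
    rw [h.d_ω_eq_smul_w_sq_mul_ω_sq hp0 hp1]
    match_scalars
    field_simp
    ring
  calc ω ^ 2 = z ^ 2 * (w ^ 2 * ω ^ 2) := by
        rw [pow_two z, pow_two w, mul_assoc z, mul_assoc w, ← hwω, ← hω]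
    _ = (p ^ 5 * ((p - 1) / (p ^ 2 + 1))) • (z ^ 4 * (ω * η)) := by
        rw [hwwω, h.d_ω hp0 hp3 hp2, mul_smul_comm, mul_smul_comm, smul_smul, ← mul_assoc,
          ← pow_add]
        congr 1
        ring

lemma d_η (h : IsQuantumDiscCalculus p d z w ω η) (hp0 : p ≠ 0) (hp3 : p ^ 3 ≠ 1)
    (hp2 : p ^ 2 + 1 ≠ 0) : d η = -(w ^ 2 * (ω * η)) := by
  have hp1 : p ≠ 1 := ne_one_of_pow_ne_one hp3
  rw [(h.swap hp0).d_ω (inv_ne_zero hp0) (by rwa [inv_pow, inv_ne_one])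
      (inv_sq_add_one_ne_zero hp0 hp2),
    h.η_mul_ω hp0 hp1, mul_neg, mul_smul_comm, smul_neg, inv_pow,
    inv_smul_smul₀ (pow_ne_zero 3 hp0)]

lemma η_sq (h : IsQuantumDiscCalculus p d z w ω η) (hp0 : p ≠ 0) (hp3 : p ^ 3 ≠ 1)
    (hp2 : p ^ 2 + 1 ≠ 0) :
    η ^ 2 = (p⁻¹ * ((p - 1) / (p ^ 2 + 1))) • (w ^ 4 * (ω * η)) := by
  have hp1 : p ≠ 1 := ne_one_of_pow_ne_one hp3
  have hp2' : 1 + p ^ 2 ≠ 0 := by rwa [add_comm]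
  rw [(h.swap hp0).ω_sq (inv_ne_zero hp0) (by rwa [inv_pow, inv_ne_one])
      (inv_sq_add_one_ne_zero hp0 hp2),
    h.η_mul_ω hp0 hp1, mul_neg, mul_smul_comm]
  match_scalars
  field_simp
  ring

lemma ωb_mul_ω {ωb : Ω} (h : IsQuantumDiscCalculus p d z w ω (p • ωb)) (hp0 : p ≠ 0)
    (hp1 : p ≠ 1) : ωb * ω = -(p ^ 3 • (ω * ωb)) := by
  have hηω := h.η_mul_ω hp0 hp1
  rw [smul_mul_assoc, mul_smul_comm, smul_comm, ← smul_neg] at hηω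
  exact smul_right_injective Ω hp0 hηω

lemma ω_mul_ωb {ωb : Ω} (h : IsQuantumDiscCalculus p d z w ω (p • ωb)) (hp0 : p ≠ 0)
    (hp1 : p ≠ 1) :
    ω * ωb = ((p ^ 3)⁻¹ / (p - 1)) • (ωb * ω + p ^ 4 • (ω * ωb)) := by
  have hp1' : p - 1 ≠ 0 := sub_ne_zero.mpr hp1
  rw [h.ωb_mul_ω hp0 hp1]
  match_scalars
  field_simp
  ring

lemma d_ωb {ωb : Ω} (h : IsQuantumDiscCalculus p d z w ω (p • ωb)) (hp0 : p ≠ 0)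
    (hp3 : p ^ 3 ≠ 1) (hp2 : p ^ 2 + 1 ≠ 0) : d ωb = -(w ^ 2 * (ω * ωb)) := by
  have hdη := h.d_η hp0 hp3 hp2
  rw [map_smul, mul_smul_comm, mul_smul_comm, ← smul_neg] at hdη
  exact smul_right_injective Ω hp0 hdη

lemma ωb_sq {ωb : Ω} (h : IsQuantumDiscCalculus p d z w ω (p • ωb)) (hp0 : p ≠ 0)
    (hp3 : p ^ 3 ≠ 1) (hp2 : p ^ 2 + 1 ≠ 0) :
    ωb ^ 2 = ((p ^ 2)⁻¹ * ((p - 1) / (p ^ 2 + 1))) • (w ^ 4 * (ω * ωb)) := by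
  have hηη := h.η_sq hp0 hp3 hp2
  rw [smul_pow, mul_smul_comm, mul_smul_comm] at hηη
  rw [← inv_smul_smul₀ (pow_ne_zero 2 hp0) (ωb ^ 2), hηη]
  match_scalars
  field_simp

end IsQuantumDiscCalculus

theorem full_relations_omega2_general {K : Type*} [Field K] {q : K} (hq0 : q ≠ 0)
    (hq6 : q ^ 6 ≠ 1) (hq4 : q ^ 4 + 1 ≠ 0)
    {A : Type*} [Ring A] [Algebra K A] {z w : A}
    (hzw : w * z - q ^ 2 • (z * w) = (1 - q ^ 2) • (1 : A))
    {σ D Db : A → A} (hσz : σ z = q ^ 2 • z) (hσw : σ w = (q ^ 2)⁻¹ • w)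
    (hDz : D z = w) (hDw : D w = 0) (hDbz : Db z = 0) (hDbw : Db w = q ^ 2 • z)
    {Ω : Type*} [Ring Ω] [Algebra K Ω] {𝒜 : ℕ → Submodule K Ω} {ι : A →ₐ[K] Ω}
    (hι0 : ∀ a : A, ι a ∈ 𝒜 0) {d : Ω →ₗ[K] Ω} (hdd : ∀ ξ : Ω, d (d ξ) = 0)
    (hLeib : ∀ {n : ℕ} {ξ : Ω}, ξ ∈ 𝒜 n → ∀ η : Ω,
      d (ξ * η) = d ξ * η + ((-1 : K) ^ n) • (ξ * d η))
    {ω ωb : Ω} (hω : ω ∈ 𝒜 1) (hωb : ωb ∈ 𝒜 1)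
    (hωcomm : ∀ a : A, ω * ι a = ι (σ a) * ω) (hωbcomm : ∀ a : A, ωb * ι a = ι (σ a) * ωb)
    (hda : ∀ a : A, d (ι a) = ι (D a) * ω + ι (Db a) * ωb)
    {v : Ω} (hv : v = ((q ^ 6)⁻¹ / (q ^ 2 - 1)) • (ωb * ω + q ^ 8 • (ω * ωb))) :
    d ω = q ^ 8 • (ι (z ^ 2) * v) ∧
    d ωb = -(ι (w ^ 2) * v) ∧
    ω * ωb = v ∧
    ωb * ω = (-q ^ 6) • v ∧
    ω ^ 2 = (q ^ 12 * ((q ^ 2 - 1) / (q ^ 4 + 1))) • (ι (z ^ 4) * v) ∧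
    ωb ^ 2 = ((q ^ 4)⁻¹ * ((q ^ 2 - 1) / (q ^ 4 + 1))) • (ι (w ^ 4) * v) := by
  have hLeib0 (a : A) (ξ : Ω) : d (ι a * ξ) = d (ι a) * ξ + ι a * d ξ := by
    simpa using hLeib (hι0 a) ξ
  have hLeib1 {θ : Ω} (hθ : θ ∈ 𝒜 1) (ξ : Ω) : d (θ * ξ) = d θ * ξ - θ * d ξ := by
    simpa [sub_eq_add_neg] using hLeib hθ ξ
  have h : IsQuantumDiscCalculus (q ^ 2) d (ι z) (ι w) ω (q ^ 2 • ωb) :=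
    { discRel := by simpa [QuantumDiscRel] using congrArg ι hzw
      qCommute_ω_z := .of_twisted_comm ι hωcomm hσz
      qCommute_ω_w := .of_twisted_comm ι hωcomm hσw
      qCommute_η_z := (QCommute.of_twisted_comm ι hωbcomm hσz).smul_left _
      qCommute_η_w := (QCommute.of_twisted_comm ι hωbcomm hσw).smul_left _
      d_z := by simp [hda, hDz, hDbz]
      d_w := by simp [hda, hDw, hDbw]
      d_d := hdd
      d_z_mul := hLeib0 z
      d_w_mul := hLeib0 w
      d_ω_mul := hLeib1 hω
      d_η_mul := hLeib1 ((𝒜 1).smul_mem _ hωb) }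
  have hp0 : q ^ 2 ≠ 0 := pow_ne_zero 2 hq0
  have hp3 : (q ^ 2) ^ 3 ≠ 1 := by rwa [← pow_mul]
  have hp2 : (q ^ 2) ^ 2 + 1 ≠ 0 := by rwa [← pow_mul]
  have hp1 : q ^ 2 ≠ 1 := ne_one_of_pow_ne_one hp3
  have hωωb : ω * ωb = v := by simpa only [hv, ← pow_mul] using h.ω_mul_ωb hp0 hp1
  simp only [map_pow]
  rw [← hωωb]
  refine ⟨?_, h.d_ωb hp0 hp3 hp2, rfl, ?_, ?_, ?_⟩
  · rw [h.d_ω hp0 hp3 hp2, mul_smul_comm, mul_smul_comm, smul_smul]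
    ring_nf
  · rw [h.ωb_mul_ω hp0 hp1, ← pow_mul, neg_smul]
  · rw [h.ω_sq hp0 hp3 hp2, mul_smul_comm, mul_smul_comm]
    module
  · rw [h.ωb_sq hp0 hp3 hp2, ← pow_mul]

theorem full_relations_omega2
    (q : ℝ) (hq0 : 0 < q) (hq1 : q < 1)
    {A : Type*} [Ring A] [Algebra ℂ A]
    (z w : A)
    (hzw : w * z - ((q : ℂ) ^ 2) • (z * w) = ((1 : ℂ) - (q : ℂ) ^ 2) • (1 : A))
    (x : A) (hx : x = 1 - z * w)
    (σ : A ≃ₐ[ℂ] A) (hσz : σ z = ((q : ℂ) ^ 2) • z)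
    (hσw : σ w = (((q : ℂ) ^ 2)⁻¹) • w)
    (D : A →ₗ[ℂ] A)
    (hD : ∀ a b : A, D (a * b) = D a * σ b + a * D b)
    (hDz : D z = w) (hDw : D w = 0)
    (Db : A →ₗ[ℂ] A)
    (hDb : ∀ a b : A, Db (a * b) = Db a * σ b + a * Db b)
    (hDbz : Db z = 0) (hDbw : Db w = ((q : ℂ) ^ 2) • z)
    {Ω : Type*} [Ring Ω] [Algebra ℂ Ω]
    (𝒜 : ℕ → Submodule ℂ Ω)
    (hmul : ∀ {m n : ℕ} {ξ η : Ω}, ξ ∈ 𝒜 m → η ∈ 𝒜 n → ξ * η ∈ 𝒜 (m + n))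
    (ι : A →ₐ[ℂ] Ω) (hι : Function.Injective ι)
    (hι0 : ∀ a : A, ι a ∈ 𝒜 0) (hι0' : ∀ u ∈ 𝒜 0, ∃ a : A, ι a = u)
    (d : Ω →ₗ[ℂ] Ω)
    (hdeg : ∀ {n : ℕ} {ξ : Ω}, ξ ∈ 𝒜 n → d ξ ∈ 𝒜 (n + 1))
    (hdd : ∀ ξ : Ω, d (d ξ) = 0)
    (hLeib : ∀ {n : ℕ} {ξ : Ω}, ξ ∈ 𝒜 n → ∀ η : Ω,
      d (ξ * η) = d ξ * η + ((-1 : ℂ) ^ n) • (ξ * d η))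
    (ω ωb : Ω) (hω : ω ∈ 𝒜 1) (hωb : ωb ∈ 𝒜 1)
    (hωcomm : ∀ a : A, ω * ι a = ι (σ a) * ω)
    (hωbcomm : ∀ a : A, ωb * ι a = ι (σ a) * ωb)
    (hda : ∀ a : A, d (ι a) = ι (D a) * ω + ι (Db a) * ωb)
    (v : Ω)
    (hv : v = ((((q : ℂ) ^ 6)⁻¹) / ((q : ℂ) ^ 2 - 1)) • (ωb * ω + ((q : ℂ) ^ 8) • (ω * ωb)))
    :
    d ω = ((q : ℂ) ^ 8) • (ι (z ^ 2) * v) ∧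
    d ωb = -(ι (w ^ 2) * v) ∧
    ω * ωb = v ∧
    ωb * ω = (-((q : ℂ) ^ 6)) • v ∧
    ω ^ 2 = ((q : ℂ) ^ 12 * (((q : ℂ) ^ 2 - 1) / ((q : ℂ) ^ 4 + 1))) • (ι (z ^ 4) * v) ∧
    ωb ^ 2 = ((((q : ℂ) ^ 4)⁻¹) * (((q : ℂ) ^ 2 - 1) / ((q : ℂ) ^ 4 + 1))) • (ι (w ^ 4) * v) := by
  exact full_relations_omega2_general (by exact_mod_cast hq0.ne')
    (by exact_mod_cast (pow_lt_one₀ hq0.le hq1 (by norm_num)).ne)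
    (by exact_mod_cast (by positivity : q ^ 4 + 1 ≠ 0))
    hzw hσz hσw hDz hDw hDbz hDbw hι0 hdd hLeib hω hωb hωcomm hωbcomm hda hv
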